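/- arXiv:math/0609130 — 2 statements merged into one kernel-verified Lean document; each statement's English description precedes it below -/
import Mathlib

section
/- For positive semidefinite matrices A, B and any real r with 0 ≤ r ≤ 1, and every index j, λ_j(A^{r+1} + B^{r+1}) ≥ σ_j(A^{1+r/2} B^{r/2} + A^{r/2} B^{1+r/2}), where λ_j denotes the j-th largest eigenvalue and σ_j the j-th largest singular value. -/
open scoped ComplexOrder Matrix

/-- `eigDesc M j` : the `j`-th largest (0-indexed) real part of the eigenvalues
(roots of the characteristic polynomial, with multiplicity) of `M`. -/
noncomputable def eigDesc {m : Type*} [Fintype m] [DecidableEq m]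
    (M : Matrix m m ℂ) (j : ℕ) : ℝ :=
  ((M.charpoly.roots.map Complex.re).sort (· ≥ ·)).getD j 0

/-- `svalDesc K j` : the `j`-th largest (0-indexed) singular value of `K`. -/
noncomputable def svalDesc {m n : Type*} [Fintype m] [Fintype n] [DecidableEq n]
    (K : Matrix m n ℂ) (j : ℕ) : ℝ :=
  Real.sqrt (eigDesc (Kᴴ * K) j)

/-- Real power of a Hermitian matrix, via the functional calculus. -/
noncomputable def Matrix.IsHermitian.rpow {n : Type*} [Fintype n] [DecidableEq n]
    {A : Matrix n n ℂ} (hA : A.IsHermitian) (r : ℝ) : Matrix n n ℂ :=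
  hA.cfc (fun x => x ^ r)

/-!
Write `C = (A + B) / 2`, `P = C^{1/2} A^{r/2}` and `Q = C^{1/2} B^{r/2}`. The matrix on the left of
the inequality is `A^{r/2} (A + B) B^{r/2} = 2 Pᴴ Q`, so the arithmetic-geometric mean inequality
of Bhatia and Kittaneh, `σ_j(2 Pᴴ Q) ≤ λ_j(P Pᴴ + Q Qᴴ)`, bounds its singular values by the
eigenvalues of `C^{1/2} (A^r + B^r) C^{1/2}`. Operator concavity of `x ↦ x^r` and operator convexity
of `x ↦ x^{r+1}` give `C^{1/2} (A^r + B^r) C^{1/2} ≤ 2 C^{r+1} ≤ A^{r+1} + B^{r+1}`, and Weyl's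
monotonicity principle concludes.

The arithmetic-geometric mean inequality comes from `X = [P Q]`: the block matrix with off-diagonal
blocks `2 Pᴴ Q`, `2 Qᴴ P` has the singular values of `2 Pᴴ Q` among its eigenvalues, and it equals
`Xᴴ X - Yᴴ Y ≤ Xᴴ X` for `Y = [P -Q]`, while `Xᴴ X` and `X Xᴴ = P Pᴴ + Q Qᴴ` have the same nonzero
eigenvalues.
-/

section Eigensystem

open Module

variable {m ι κ : Type*} [Fintype m]

/-- Pairwise orthogonal nonzero eigenvectors `v i` of `M` with real eigenvalues `μ i`; they are
not normalized. -/
structure IsOrthogonalEigensystem (M : Matrix m m ℂ) (v : ι → m → ℂ) (μ : ι → ℝ) : Prop where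
  orthogonal : Pairwise fun i k => star (v i) ⬝ᵥ v k = 0
  ne_zero : ∀ i, v i ≠ 0
  mulVec_eq : ∀ i, M *ᵥ v i = μ i • v i

namespace IsOrthogonalEigensystem

variable {M : Matrix m m ℂ} {v : ι → m → ℂ} {μ : ι → ℝ}

theorem comp (h : IsOrthogonalEigensystem M v μ) {f : κ → ι} (hf : Function.Injective f) :
    IsOrthogonalEigensystem M (v ∘ f) (μ ∘ f) where
  orthogonal _ _ hik := h.orthogonal (hf.ne hik)
  ne_zero i := h.ne_zero (f i)
  mulVec_eq i := h.mulVec_eq (f i)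

theorem neg (h : IsOrthogonalEigensystem M v μ) : IsOrthogonalEigensystem (-M) v (-μ) where
  orthogonal := h.orthogonal
  ne_zero := h.ne_zero
  mulVec_eq i := by rw [Matrix.neg_mulVec, h.mulVec_eq, Pi.neg_apply, neg_smul]

theorem star_sum_dotProduct_sum [Fintype ι] (h : IsOrthogonalEigensystem M v μ) (a b : ι → ℂ) :
    star (∑ i, a i • v i) ⬝ᵥ ∑ i, b i • v i = ∑ i, star (a i) * b i * (star (v i) ⬝ᵥ v i) := by
  simp only [star_sum, star_smul, sum_dotProduct, dotProduct_sum, smul_dotProduct,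
    dotProduct_smul, smul_eq_mul]
  refine Finset.sum_congr rfl fun i _ => ?_
  rw [Finset.sum_eq_single_of_mem i (Finset.mem_univ i) fun k _ hk => by
    rw [h.orthogonal hk, mul_zero]]
  ring

theorem finrank_span [Fintype ι] (h : IsOrthogonalEigensystem M v μ) :
    finrank ℂ (Submodule.span ℂ (Set.range v)) = Fintype.card ι := by
  refine finrank_span_eq_card (Fintype.linearIndependent_iff.mpr fun a ha => ?_)
  have hnorm : ∑ i, star (a i) * a i * (star (v i) ⬝ᵥ v i) = 0 := by
    rw [← h.star_sum_dotProduct_sum, ha, dotProduct_zero]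
  have hnonneg (i : ι) : 0 ≤ star (a i) * a i * (star (v i) ⬝ᵥ v i) :=
    mul_nonneg (star_mul_self_nonneg _) (dotProduct_star_self_nonneg _)
  intro i
  have hi := (Finset.sum_eq_zero_iff_of_nonneg fun k _ => hnonneg k).mp hnorm i (Finset.mem_univ i)
  simpa [h.ne_zero i] using hi

theorem smul_dotProduct_le_of_mem_span [Finite ι] (h : IsOrthogonalEigensystem M v μ) {t : ℝ}
    (ht : ∀ i, t ≤ μ i) {x : m → ℂ} (hx : x ∈ Submodule.span ℂ (Set.range v)) :
    t • (star x ⬝ᵥ x) ≤ star x ⬝ᵥ M *ᵥ x := by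
  cases nonempty_fintype ι
  obtain ⟨a, rfl⟩ := (Submodule.mem_span_range_iff_exists_fun ℂ).mp hx
  have hM : M *ᵥ ∑ i, a i • v i = ∑ i, (a i * μ i) • v i := by
    simp only [Matrix.mulVec_sum, Matrix.mulVec_smul, h.mulVec_eq, mul_smul, Complex.coe_smul]
  rw [hM, h.star_sum_dotProduct_sum, h.star_sum_dotProduct_sum, Finset.smul_sum]
  refine Finset.sum_le_sum fun i _ => ?_
  calc t • (star (a i) * a i * (star (v i) ⬝ᵥ v i))
      ≤ μ i • (star (a i) * a i * (star (v i) ⬝ᵥ v i)) :=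
        smul_le_smul_of_nonneg_right (ht i)
          (mul_nonneg (star_mul_self_nonneg _) (dotProduct_star_self_nonneg _))
    _ = star (a i) * (a i * μ i) * (star (v i) ⬝ᵥ v i) := by
        rw [Complex.real_smul]; ring

end IsOrthogonalEigensystem

variable [DecidableEq m] {M N : Matrix m m ℂ} {j : ℕ}

theorem eigDesc_eq_eigenvalues₀ (hM : M.IsHermitian) (hj : j < Fintype.card m) :
    eigDesc M j = hM.eigenvalues₀ ⟨j, hj⟩ := by
  have hsort : (M.charpoly.roots.map Complex.re).sort (· ≥ ·) = List.ofFn hM.eigenvalues₀ :=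
    hM.sort_roots_charpoly_eq_eigenvalues₀
  rw [eigDesc, hsort, List.getD_eq_getElem _ _ (by simpa using hj), List.getElem_ofFn]

theorem eigDesc_le_eigDesc_of_le (hM : M.IsHermitian) {i : ℕ} (hij : i ≤ j)
    (hj : j < Fintype.card m) : eigDesc M j ≤ eigDesc M i := by
  rw [eigDesc_eq_eigenvalues₀ hM hj, eigDesc_eq_eigenvalues₀ hM (hij.trans_lt hj)]
  exact hM.eigenvalues₀_antitone hij

theorem exists_isOrthogonalEigensystem_eigDesc (hM : M.IsHermitian) :
    ∃ v : Fin (Fintype.card m) → m → ℂ, IsOrthogonalEigensystem M v (fun i => eigDesc M i) := by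
  let e : Fin (Fintype.card m) ≃ m := Fintype.equivOfCardEq (Fintype.card_fin _)
  refine ⟨fun i => hM.eigenvectorBasis (e i), fun i k hik => ?_, fun i => ?_, fun i => ?_⟩
  · beta_reduce
    rw [dotProduct_comm, ← EuclideanSpace.inner_eq_star_dotProduct]
    exact hM.eigenvectorBasis.orthonormal.2 (e.injective.ne hik)
  · exact (WithLp.ofLp_eq_zero 2).not.mpr (hM.eigenvectorBasis.orthonormal.ne_zero (e i))
  · rw [hM.mulVec_eigenvectorBasis, eigDesc_eq_eigenvalues₀ hM i.isLt]
    exact congrArg (hM.eigenvalues₀ · • _) (e.symm_apply_apply i)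

/-- Courant–Fischer: by dimension count, `V` meets the span of the eigenvectors numbered from `j`
on, where the quadratic form is at most `eigDesc M j`. -/
theorem le_eigDesc_of_lt_finrank (hM : M.IsHermitian) {V : Submodule ℂ (m → ℂ)}
    (hjV : j < finrank ℂ V) {t : ℝ} (hV : ∀ x ∈ V, t • (star x ⬝ᵥ x) ≤ star x ⬝ᵥ M *ᵥ x) :
    t ≤ eigDesc M j := by
  obtain ⟨v, hv⟩ := exists_isOrthogonalEigensystem_eigDesc hM
  let tail (i : Fin (Fintype.card m - j)) : Fin (Fintype.card m) := ⟨j + i, by omega⟩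
  have htail : Function.Injective tail := fun i k h => by simpa [tail, Fin.ext_iff] using h
  set W := Submodule.span ℂ (Set.range (v ∘ tail))
  have hmeet : ¬ Disjoint V W := fun hdisj => by
    have hdim := Submodule.finrank_add_finrank_le_of_disjoint hdisj
    rw [(hv.comp htail).finrank_span, Fintype.card_fin, finrank_fintype_fun_eq_card] at hdim
    omega
  obtain ⟨x, hxV, hxW, hx₀⟩ : ∃ x ∈ V, x ∈ W ∧ x ≠ 0 := by
    simpa [Submodule.disjoint_def] using hmeet
  have hupper : (-eigDesc M j) • (star x ⬝ᵥ x) ≤ star x ⬝ᵥ (-M) *ᵥ x :=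
    (hv.comp htail).neg.smul_dotProduct_le_of_mem_span
      (fun i => neg_le_neg (eigDesc_le_eigDesc_of_le hM (Nat.le_add_right j i) (tail i).isLt)) hxW
  rw [Matrix.neg_mulVec, dotProduct_neg, neg_smul, neg_le_neg_iff] at hupper
  exact le_of_smul_le_smul_right ((hV x hxV).trans hupper)
    (Matrix.dotProduct_star_self_pos_iff.mpr hx₀)

theorem IsOrthogonalEigensystem.le_eigDesc (hM : M.IsHermitian) {v : Fin (j + 1) → m → ℂ}
    {μ : Fin (j + 1) → ℝ} (h : IsOrthogonalEigensystem M v μ) {t : ℝ} (ht : ∀ i, t ≤ μ i) :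
    t ≤ eigDesc M j := by
  refine le_eigDesc_of_lt_finrank hM (V := Submodule.span ℂ (Set.range v)) ?_
    fun x hx => h.smul_dotProduct_le_of_mem_span ht hx
  rw [h.finrank_span, Fintype.card_fin]
  exact j.lt_succ_self

open scoped MatrixOrder in
theorem eigDesc_mono (hM : M.IsHermitian) (hN : N.IsHermitian) (hMN : M ≤ N)
    (hj : j < Fintype.card m) : eigDesc M j ≤ eigDesc N j := by
  obtain ⟨v, hv⟩ := exists_isOrthogonalEigensystem_eigDesc hM
  have hhead := hv.comp (Fin.castLE_injective (Nat.succ_le_of_lt hj))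
  refine le_eigDesc_of_lt_finrank hN
    (V := Submodule.span ℂ (Set.range (v ∘ Fin.castLE (Nat.succ_le_of_lt hj)))) ?_ fun x hx => ?_
  · rw [hhead.finrank_span, Fintype.card_fin]
    exact j.lt_succ_self
  · calc eigDesc M j • (star x ⬝ᵥ x) ≤ star x ⬝ᵥ M *ᵥ x :=
          hhead.smul_dotProduct_le_of_mem_span
            (fun i => eigDesc_le_eigDesc_of_le hM (Nat.le_of_lt_succ i.isLt) hj) hx
      _ ≤ star x ⬝ᵥ N *ᵥ x := by
          rw [← sub_nonneg, ← dotProduct_sub, ← Matrix.sub_mulVec]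
          exact (Matrix.le_iff.mp hMN).dotProduct_mulVec_nonneg x

end Eigensystem

section PosSemidef

variable {m n : Type*} [Fintype m] [Fintype n] [DecidableEq n]

theorem nonneg_of_mem_map_re_roots_charpoly {M : Matrix n n ℂ} (hM : M.PosSemidef) :
    ∀ x ∈ M.charpoly.roots.map Complex.re, 0 ≤ x := by
  rw [hM.1.roots_charpoly_eq_eigenvalues]
  simpa using hM.eigenvalues_nonneg

theorem eigDesc_nonneg {M : Matrix n n ℂ} (hM : M.PosSemidef) (j : ℕ) : 0 ≤ eigDesc M j := by
  rw [eigDesc]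
  rcases lt_or_ge j ((M.charpoly.roots.map Complex.re).sort (· ≥ ·)).length with hj | hj
  · rw [List.getD_eq_getElem _ _ hj]
    exact nonneg_of_mem_map_re_roots_charpoly hM _ ((Multiset.mem_sort _).mp (List.getElem_mem hj))
  · rw [List.getD_eq_default _ _ hj]

theorem svalDesc_sq (K : Matrix m n ℂ) (j : ℕ) : svalDesc K j ^ 2 = eigDesc (Kᴴ * K) j :=
  Real.sq_sqrt (eigDesc_nonneg (Matrix.posSemidef_conjTranspose_mul_self K) j)

theorem getD_sort_replicate_zero_add {α : Type*} [LinearOrder α] [Zero α] {s : Multiset α}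
    (hs : ∀ x ∈ s, 0 ≤ x) (k j : ℕ) :
    ((Multiset.replicate k 0 + s).sort (· ≥ ·)).getD j 0 = (s.sort (· ≥ ·)).getD j 0 := by
  have hsort : (Multiset.replicate k 0 + s).sort (· ≥ ·) =
      s.sort (· ≥ ·) ++ List.replicate k 0 := by
    refine List.Perm.eq_of_pairwise' (r := (· ≥ ·)) (Multiset.pairwise_sort _ _) ?_ ?_
    · refine List.pairwise_append.mpr
        ⟨Multiset.pairwise_sort _ _, List.pairwise_replicate_of_refl, fun x hx y hy => ?_⟩
      rw [List.eq_of_mem_replicate hy]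
      exact hs x ((Multiset.mem_sort _).mp hx)
    · rw [← Multiset.coe_eq_coe, Multiset.sort_eq, ← Multiset.coe_add, Multiset.sort_eq,
        Multiset.coe_replicate, add_comm]
  rw [hsort]
  rcases lt_or_ge j (s.sort (· ≥ ·)).length with hj | hj
  · rw [List.getD_append _ _ _ _ hj]
  · rw [List.getD_append_right _ _ _ _ hj, List.getD_eq_default _ _ hj,
      List.getD_eq_getElem?_getD, List.getElem?_getD_replicate_default_eq]

theorem eigDesc_conjTranspose_mul_self [DecidableEq m] (X : Matrix m n ℂ) (j : ℕ) :
    eigDesc (Xᴴ * X) j = eigDesc (X * Xᴴ) j := by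
  have hroots : Multiset.replicate (Fintype.card m) 0 + (Xᴴ * X).charpoly.roots.map Complex.re =
      Multiset.replicate (Fintype.card n) 0 + (X * Xᴴ).charpoly.roots.map Complex.re := by
    have hpoly := congrArg Polynomial.roots (Matrix.charpoly_mul_comm' Xᴴ X)
    rw [Polynomial.roots_mul, Polynomial.roots_mul, Polynomial.roots_X_pow,
      Polynomial.roots_X_pow] at hpoly
    · simpa [Multiset.nsmul_singleton] using congrArg (Multiset.map Complex.re) hpoly
    all_goals exact ((Polynomial.monic_X_pow _).mul (Matrix.charpoly_monic _)).ne_zero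
  rw [eigDesc, eigDesc, ← getD_sort_replicate_zero_add
    (nonneg_of_mem_map_re_roots_charpoly (Matrix.posSemidef_conjTranspose_mul_self X)), hroots,
    getD_sort_replicate_zero_add
      (nonneg_of_mem_map_re_roots_charpoly (Matrix.posSemidef_self_mul_conjTranspose X))]

end PosSemidef

section ArithmeticGeometricMean

open Matrix
open scoped MatrixOrder

variable {ι l m n : Type*} [Fintype l]

theorem fromBlocks_two_smul_le [Finite m] [Finite n] (P : Matrix l m ℂ) (Q : Matrix l n ℂ) :
    fromBlocks 0 ((2 : ℂ) • (Pᴴ * Q)) ((2 : ℂ) • (Pᴴ * Q))ᴴ 0 ≤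
      (fromCols P Q)ᴴ * fromCols P Q := by
  have hsplit : (fromCols P Q)ᴴ * fromCols P Q = (fromCols P (-Q))ᴴ * fromCols P (-Q) +
      fromBlocks 0 ((2 : ℂ) • (Pᴴ * Q)) ((2 : ℂ) • (Pᴴ * Q))ᴴ 0 := by
    simp [conjTranspose_fromCols_eq_fromRows_conjTranspose, fromBlocks_add, two_smul]
  rw [Matrix.le_iff, hsplit, add_sub_cancel_right]
  exact posSemidef_conjTranspose_mul_self _

variable [Fintype m] [Fintype n]

/-- The convention `0⁻¹ = 0` also covers `s i = 0`, where `K *ᵥ v i = 0`. -/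
theorem isOrthogonalEigensystem_fromBlocks {K : Matrix m n ℂ} {v : ι → n → ℂ} {s : ι → ℝ}
    (hv : IsOrthogonalEigensystem (Kᴴ * K) v (s ^ 2)) :
    IsOrthogonalEigensystem (fromBlocks 0 K Kᴴ 0)
      (fun i => Sum.elim ((s i)⁻¹ • K *ᵥ v i) (v i)) s := by
  have hKv (i : ι) : Kᴴ *ᵥ K *ᵥ v i = s i ^ 2 • v i := by
    rw [mulVec_mulVec, hv.mulVec_eq, Pi.pow_apply]
  refine ⟨fun i k hik => ?_, fun i hi => hv.ne_zero i (congrArg (· ∘ Sum.inr) hi), fun i => ?_⟩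
  · have hv_orth : star (v i) ⬝ᵥ v k = 0 := hv.orthogonal hik
    have hKv_orth : star (K *ᵥ v i) ⬝ᵥ K *ᵥ v k = 0 := by
      rw [star_mulVec, ← dotProduct_mulVec, hKv, dotProduct_smul, hv_orth, smul_zero]
    simp [Function.star_sumElim, sumElim_dotProduct_sumElim, hKv_orth, hv_orth]
  · have hleft : K *ᵥ v i = s i • (s i)⁻¹ • K *ᵥ v i := by
      rcases eq_or_ne (s i) 0 with hs | hs
      · rw [hs, zero_smul, ← conjTranspose_mul_self_mulVec_eq_zero, ← mulVec_mulVec, hKv, hs,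
          zero_pow two_ne_zero, zero_smul]
      · exact (smul_inv_smul₀ hs _).symm
    have hright : Kᴴ *ᵥ (s i)⁻¹ • K *ᵥ v i = s i • v i := by
      rw [mulVec_smul, hKv, smul_smul, pow_two, ← mul_assoc, inv_mul_mul_self]
    rw [fromBlocks_mulVec, Sum.elim_comp_inl, Sum.elim_comp_inr, zero_mulVec, zero_mulVec, zero_add,
      add_zero, hright]
    ext (k | k)
    exacts [congrFun hleft k, rfl]

variable [DecidableEq n] {j : ℕ}

theorem svalDesc_le_eigDesc_fromBlocks [DecidableEq m] (K : Matrix m n ℂ)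
    (hj : j < Fintype.card n) :
    svalDesc K j ≤ eigDesc (fromBlocks 0 K Kᴴ 0) j := by
  have hK := isHermitian_conjTranspose_mul_self K
  obtain ⟨v, hv⟩ := exists_isOrthogonalEigensystem_eigDesc hK
  simp only [← svalDesc_sq] at hv
  exact IsOrthogonalEigensystem.le_eigDesc (isHermitian_zero.fromBlocks rfl isHermitian_zero)
    ((isOrthogonalEigensystem_fromBlocks hv).comp (Fin.castLE_injective (Nat.succ_le_of_lt hj)))
    fun i => Real.sqrt_le_sqrt (eigDesc_le_eigDesc_of_le hK (Nat.le_of_lt_succ i.isLt) hj)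

theorem svalDesc_two_smul_conjTranspose_mul_le [DecidableEq l] (P : Matrix l m ℂ)
    (Q : Matrix l n ℂ) (hj : j < Fintype.card n) :
    svalDesc ((2 : ℂ) • (Pᴴ * Q)) j ≤ eigDesc (P * Pᴴ + Q * Qᴴ) j := by
  classical
  calc svalDesc ((2 : ℂ) • (Pᴴ * Q)) j
      ≤ eigDesc (fromBlocks 0 ((2 : ℂ) • (Pᴴ * Q)) ((2 : ℂ) • (Pᴴ * Q))ᴴ 0) j :=
        svalDesc_le_eigDesc_fromBlocks _ hj
    _ ≤ eigDesc ((fromCols P Q)ᴴ * fromCols P Q) j :=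
        eigDesc_mono (isHermitian_zero.fromBlocks rfl isHermitian_zero)
          (isHermitian_conjTranspose_mul_self _) (fromBlocks_two_smul_le P Q)
          (by rw [Fintype.card_sum]; omega)
    _ = eigDesc (fromCols P Q * (fromCols P Q)ᴴ) j := eigDesc_conjTranspose_mul_self _ j
    _ = eigDesc (P * Pᴴ + Q * Qᴴ) j := by
        rw [conjTranspose_fromCols_eq_fromRows_conjTranspose, fromCols_mul_fromRows]

end ArithmeticGeometricMean

section OperatorPowers

open Set

section Add

variable {𝒜 : Type*} [PartialOrder 𝒜] [Ring 𝒜] [StarRing 𝒜] [TopologicalSpace 𝒜]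
  [StarOrderedRing 𝒜] [Algebra ℝ 𝒜] [ContinuousFunctionalCalculus ℝ 𝒜 IsSelfAdjoint]
  [NonnegSpectrumClass ℝ 𝒜]

open scoped NNReal in
theorem cfc_rpow_add_of_nonneg {s t : ℝ} (hs : 0 ≤ s) (ht : 0 ≤ t) (a : 𝒜) :
    a ^ (s + t) = a ^ s * a ^ t := by
  have hcont {y : ℝ} (hy : 0 ≤ y) : ContinuousOn (fun x : ℝ≥0 => x ^ y) (spectrum ℝ≥0 a) :=
    (NNReal.continuous_rpow_const hy).continuousOn
  simp only [CFC.rpow_def, NNReal.rpow_add_of_nonneg _ hs ht]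
  exact cfc_mul _ _ a (hcont hs) (hcont ht)

end Add

variable {𝒜 : Type*} [CStarAlgebra 𝒜] [PartialOrder 𝒜] [StarOrderedRing 𝒜]

theorem cfcₙ_rpowIntegrand₁₂_eq {p t : ℝ} (ht : 0 < t) {a : 𝒜} (ha : 0 ≤ a) :
    cfcₙ (Real.rpowIntegrand₁₂ p t) a =
      (t ^ (p - 1) * t⁻¹) • a + (t ^ (p - 1) * t) • Ring.inverse (algebraMap ℝ 𝒜 t + a) +
        algebraMap ℝ 𝒜 (-t ^ (p - 1)) := by
  have hneₙ : ∀ x ∈ quasispectrum ℝ a, t + x ≠ 0 := fun x hx =>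
    (add_pos_of_pos_of_nonneg ht (quasispectrum_nonneg_of_nonneg a ha x hx)).ne'
  have hinvₙ : ContinuousOn (fun x : ℝ => (t + x)⁻¹) (quasispectrum ℝ a) :=
    ContinuousOn.inv₀ (by fun_prop) hneₙ
  have hsub : spectrum ℝ a ⊆ quasispectrum ℝ a := spectrum_subset_quasispectrum ℝ a
  have hinv : ContinuousOn (fun x : ℝ => (t + x)⁻¹) (spectrum ℝ a) := hinvₙ.mono hsub
  have hlin : ContinuousOn (fun x : ℝ => t ^ (p - 1) * t⁻¹ * x) (spectrum ℝ a) := by fun_prop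
  have hrat : ContinuousOn (fun x : ℝ => t ^ (p - 1) * t * (t + x)⁻¹) (spectrum ℝ a) :=
    continuousOn_const.mul hinv
  have hsum : ContinuousOn
      (fun x : ℝ => t ^ (p - 1) * t⁻¹ * x + t ^ (p - 1) * t * (t + x)⁻¹) (spectrum ℝ a) :=
    hlin.add hrat
  have hid : ContinuousOn (fun x : ℝ => x) (spectrum ℝ a) := continuousOn_id
  have hsplit : Real.rpowIntegrand₁₂ p t = fun x =>
      t ^ (p - 1) * t⁻¹ * x + t ^ (p - 1) * t * (t + x)⁻¹ + -t ^ (p - 1) := by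
    ext x
    rw [Real.rpowIntegrand₁₂]
    ring
  have hcont : ContinuousOn (Real.rpowIntegrand₁₂ p t) (quasispectrum ℝ a) := by
    rw [hsplit]
    exact ((continuousOn_const.mul continuousOn_id).add (continuousOn_const.mul hinvₙ)).add
      continuousOn_const
  have hsa : IsSelfAdjoint a := ha.isSelfAdjoint
  rw [cfcₙ_eq_cfc (hf := hcont) (hf0 := Real.rpowIntegrand₁₂_zero ht), hsplit,
    cfc_add_const _ _ a hsum hsa, cfc_add (a := a) _ _ hlin hrat,
    cfc_const_mul _ _ a hid, cfc_const_mul _ _ a hinv,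
    cfc_inv _ a (fun x hx => hneₙ x (hsub hx)) (continuousOn_const.add hid) hsa,
    cfc_const_add _ _ a hid hsa, cfc_id' ℝ a hsa]

theorem convexOn_cfcₙ_rpowIntegrand₁₂ (p : ℝ) {t : ℝ} (ht : 0 < t) :
    ConvexOn ℝ (Ici (0 : 𝒜)) (cfcₙ (Real.rpowIntegrand₁₂ p t)) := by
  refine ConvexOn.congr ?_ fun a ha => (cfcₙ_rpowIntegrand₁₂_eq ht ha).symm
  refine ConvexOn.add (ConvexOn.add ?_ ?_) (convexOn_const _ (convex_Ici 0))
  · exact ConvexOn.smul (by positivity) (convexOn_id (convex_Ici 0))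
  · exact ConvexOn.smul (by positivity) (CStarAlgebra.convexOn_ringInverse_algebraMap_add ht)

theorem convexOn_sq_isSelfAdjoint : ConvexOn ℝ {a : 𝒜 | IsSelfAdjoint a} (fun a => a ^ 2) := by
  refine ⟨(selfAdjoint.submodule ℝ 𝒜).convex, fun a ha b hb s t hs ht hst => ?_⟩
  have hgap : s • a ^ 2 + t • b ^ 2 - (s • a + t • b) ^ 2 = (s * t) • (a - b) ^ 2 := by
    obtain rfl : t = 1 - s := by linarith
    simp only [pow_two, add_mul, mul_add, sub_mul, mul_sub, smul_mul_smul_comm]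
    module
  rw [← sub_nonneg, hgap]
  exact smul_nonneg (mul_nonneg hs ht) (ha.sub hb).sq_nonneg

open MeasureTheory in
theorem convexOn_cfc_rpow_of_mem_Ioo {p : ℝ} (hp : p ∈ Ioo 1 2) :
    ConvexOn ℝ (Ici (0 : 𝒜)) (fun a => a ^ p) := by
  lift p to NNReal using zero_le_one.trans hp.1.le
  obtain ⟨μ, hμ⟩ :=
    CFC.exists_measure_nnrpow_eq_integral_cfcₙ_rpowIntegrand₁₂ 𝒜 (p := p) (by exact_mod_cast hp)
  have hp₀ : 0 < p := by exact_mod_cast zero_lt_one.trans hp.1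
  refine ConvexOn.congr (integral_convexOn_of_integrand_ae (convex_Ici _) ?_
    fun a ha => (hμ a ha).1) fun a ha => ((CFC.nnrpow_eq_rpow hp₀).symm.trans (hμ a ha).2).symm
  filter_upwards [ae_restrict_mem measurableSet_Ioi] with t ht
  exact convexOn_cfcₙ_rpowIntegrand₁₂ p ht

theorem convexOn_cfc_rpow {p : ℝ} (hp : p ∈ Icc 1 2) :
    ConvexOn ℝ (Ici (0 : 𝒜)) (fun a => a ^ p) := by
  rcases hp.1.eq_or_lt with rfl | h₁
  · exact (convexOn_id (convex_Ici 0)).congr fun a ha => (CFC.rpow_one a ha).symm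
  rcases hp.2.eq_or_lt with rfl | h₂
  · exact (convexOn_sq_isSelfAdjoint.subset (fun _ ha => ha.isSelfAdjoint) (convex_Ici 0)).congr
      fun a ha => (CFC.rpow_natCast a 2 ha).symm
  · exact convexOn_cfc_rpow_of_mem_Ioo ⟨h₁, h₂⟩

theorem conjSqrt_rpow_self {r : ℝ} (hr : 0 ≤ r) (c : 𝒜) :
    CFC.conjSqrt c (c ^ r) = c ^ (r + 1) := by
  rw [CFC.conjSqrt_apply, CFC.sqrt_eq_rpow, ← cfc_rpow_add_of_nonneg (by norm_num) hr,
    ← cfc_rpow_add_of_nonneg (by positivity) (by norm_num)]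
  congr 1
  ring

theorem conjSqrt_midpoint_rpow_add_rpow_le {r : ℝ} (hr : r ∈ Icc 0 1) {a b : 𝒜} (ha : 0 ≤ a)
    (hb : 0 ≤ b) :
    CFC.conjSqrt (midpoint ℝ a b) (a ^ r + b ^ r) ≤ a ^ (r + 1) + b ^ (r + 1) := by
  have hmid : midpoint ℝ a b = (1 / 2 : ℝ) • a + (1 / 2 : ℝ) • b := by
    rw [midpoint_eq_smul_add, invOf_eq_inv, smul_add, one_div]
  have hconcave : a ^ r + b ^ r ≤ (2 : ℝ) • midpoint ℝ a b ^ r := by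
    have h := (CFC.concaveOn_rpow hr).2 ha hb one_half_pos.le one_half_pos.le (add_halves 1)
    rw [← hmid, ← smul_add] at h
    simpa [smul_smul] using smul_le_smul_of_nonneg_left h (zero_le_two (α := ℝ))
  have hconvex : (2 : ℝ) • midpoint ℝ a b ^ (r + 1) ≤ a ^ (r + 1) + b ^ (r + 1) := by
    have h := (convexOn_cfc_rpow (p := r + 1) ⟨by linarith [hr.1], by linarith [hr.2]⟩).2 ha hb
      one_half_pos.le one_half_pos.le (add_halves 1)
    rw [← hmid, ← smul_add] at h
    simpa [smul_smul] using smul_le_smul_of_nonneg_left h (zero_le_two (α := ℝ))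
  calc CFC.conjSqrt (midpoint ℝ a b) (a ^ r + b ^ r)
      ≤ CFC.conjSqrt (midpoint ℝ a b) ((2 : ℝ) • midpoint ℝ a b ^ r) :=
        CFC.conjSqrt_le_conjSqrt hconcave
    _ = (2 : ℝ) • midpoint ℝ a b ^ (r + 1) := by
        rw [map_smul, conjSqrt_rpow_self hr.1]
    _ ≤ a ^ (r + 1) + b ^ (r + 1) := hconvex

end OperatorPowers

section MatrixPowers

open scoped MatrixOrder Matrix.Norms.L2Operator

variable {m : Type*} [Fintype m] [DecidableEq m] {A B : Matrix m m ℂ}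

theorem isHermitian_rpow_eq_cfc_rpow (hA : A.PosSemidef) (s : ℝ) : hA.1.rpow s = A ^ s := by
  rw [Matrix.IsHermitian.rpow, ← Matrix.IsHermitian.cfc_eq,
    CFC.rpow_eq_cfc_real (ha := hA.nonneg)]

theorem sqrt_mul_rpow_half_mul_conjTranspose {r : ℝ} (hr : 0 ≤ r) (A C : Matrix m m ℂ) :
    (CFC.sqrt C * A ^ (r / 2)) * (CFC.sqrt C * A ^ (r / 2))ᴴ = CFC.conjSqrt C (A ^ r) := by
  have hsqrt : (CFC.sqrt C)ᴴ = CFC.sqrt C := (CFC.sqrt_nonneg C).isSelfAdjoint.star_eq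
  have hrpow : (A ^ (r / 2))ᴴ = A ^ (r / 2) := CFC.rpow_nonneg.isSelfAdjoint.star_eq
  rw [Matrix.conjTranspose_mul, hsqrt, hrpow, CFC.conjSqrt_apply, ← mul_assoc,
    mul_assoc (CFC.sqrt C), ← cfc_rpow_add_of_nonneg (by positivity) (by positivity), add_halves]

theorem two_smul_conjTranspose_sqrt_midpoint_mul {r : ℝ} (hr : 0 ≤ r) (hA : 0 ≤ A) (hB : 0 ≤ B) :
    (2 : ℂ) • ((CFC.sqrt (midpoint ℝ A B) * A ^ (r / 2))ᴴ *
        (CFC.sqrt (midpoint ℝ A B) * B ^ (r / 2))) =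
      A ^ (1 + r / 2) * B ^ (r / 2) + A ^ (r / 2) * B ^ (1 + r / 2) := by
  have hc : 0 ≤ midpoint ℝ A B := (convex_Ici (0 : Matrix m m ℂ)).midpoint_mem hA hB
  have hsqrt : (CFC.sqrt (midpoint ℝ A B))ᴴ = CFC.sqrt (midpoint ℝ A B) :=
    (CFC.sqrt_nonneg _).isSelfAdjoint.star_eq
  have hA' : (A ^ (r / 2))ᴴ = A ^ (r / 2) := CFC.rpow_nonneg.isSelfAdjoint.star_eq
  calc _ = A ^ (r / 2) * ((2 : ℂ) • midpoint ℝ A B) * B ^ (r / 2) := by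
        rw [Matrix.conjTranspose_mul, hsqrt, hA', mul_assoc, ← mul_assoc (CFC.sqrt _),
          CFC.sqrt_mul_sqrt_self _ hc, mul_smul_comm, smul_mul_assoc, mul_assoc]
    _ = A ^ (r / 2) * A * B ^ (r / 2) + A ^ (r / 2) * (B * B ^ (r / 2)) := by
        rw [two_smul, midpoint_add_self, mul_add, add_mul, mul_assoc _ B]
    _ = _ := by
        nth_rw 2 [← CFC.rpow_one A]
        nth_rw 2 [← CFC.rpow_one B]
        rw [← cfc_rpow_add_of_nonneg (by positivity) zero_le_one,
          ← cfc_rpow_add_of_nonneg zero_le_one (by positivity), add_comm (r / 2)]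

theorem eig_rpow_sum_ge_sval_general (hA : A.PosSemidef) (hB : B.PosSemidef) {r : ℝ}
    (hr : r ∈ Set.Icc 0 1) {j : ℕ} (hj : j < Fintype.card m) :
    svalDesc (hA.1.rpow (1 + r / 2) * hB.1.rpow (r / 2) +
        hA.1.rpow (r / 2) * hB.1.rpow (1 + r / 2)) j ≤
      eigDesc (hA.1.rpow (r + 1) + hB.1.rpow (r + 1)) j := by
  simp only [isHermitian_rpow_eq_cfc_rpow hA, isHermitian_rpow_eq_cfc_rpow hB]
  let P := CFC.sqrt (midpoint ℝ A B) * A ^ (r / 2)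
  let Q := CFC.sqrt (midpoint ℝ A B) * B ^ (r / 2)
  have hPQ : P * Pᴴ + Q * Qᴴ ≤ A ^ (r + 1) + B ^ (r + 1) := by
    rw [sqrt_mul_rpow_half_mul_conjTranspose hr.1, sqrt_mul_rpow_half_mul_conjTranspose hr.1,
      ← map_add]
    exact conjSqrt_midpoint_rpow_add_rpow_le hr hA.nonneg hB.nonneg
  calc svalDesc (A ^ (1 + r / 2) * B ^ (r / 2) + A ^ (r / 2) * B ^ (1 + r / 2)) j
      = svalDesc ((2 : ℂ) • (Pᴴ * Q)) j := by
        rw [two_smul_conjTranspose_sqrt_midpoint_mul hr.1 hA.nonneg hB.nonneg]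
    _ ≤ eigDesc (P * Pᴴ + Q * Qᴴ) j := svalDesc_two_smul_conjTranspose_mul_le P Q hj
    _ ≤ eigDesc (A ^ (r + 1) + B ^ (r + 1)) j :=
        eigDesc_mono ((Matrix.isHermitian_mul_conjTranspose_self P).add
          (Matrix.isHermitian_mul_conjTranspose_self Q))
          (CFC.rpow_nonneg.isSelfAdjoint.add CFC.rpow_nonneg.isSelfAdjoint) hPQ hj

end MatrixPowers

theorem eig_rpow_sum_ge_sval {n : ℕ} {A B : Matrix (Fin n) (Fin n) ℂ}
    (hA : A.PosSemidef) (hB : B.PosSemidef) (r : ℝ) (hr0 : 0 ≤ r) (hr1 : r ≤ 1)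
    (j : ℕ) (hj : j < n) :
    svalDesc (hA.1.rpow (1 + r / 2) * hB.1.rpow (r / 2)
        + hA.1.rpow (r / 2) * hB.1.rpow (1 + r / 2)) j
      ≤ eigDesc (hA.1.rpow (r + 1) + hB.1.rpow (r + 1)) j :=
  eig_rpow_sum_ge_sval_general hA hB ⟨hr0, hr1⟩ (by rwa [Fintype.card_fin])
end

section
/- For every PSD matrix A ≥ 0 and real p with 0 ≤ p ≤ 1, the map A ↦ A^p is operator monotone: if A ≥ B ≥ 0 then A^p ≥ B^p (Loewner–Heinz inequality). -/
open scoped ComplexOrder Matrix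

section

variable {n : Type*} [Fintype n] [DecidableEq n] {A B : Matrix n n ℂ}

open scoped MatrixOrder

theorem isHermitian_rpow_eq_rpow_of_posSemidef (hA : A.PosSemidef) (p : ℝ) :
    hA.1.rpow p = A ^ p := by
  rw [CFC.rpow_eq_cfc_real hA.nonneg, hA.1.cfc_eq, Matrix.IsHermitian.rpow]

-- The L2 operator norm makes the matrices a C⋆-algebra, as `CFC.rpow_le_rpow` requires.
open scoped Matrix.Norms.L2Operator in
theorem loewner_heinz_general (hA : A.IsHermitian) (hB : B.PosSemidef) {p : ℝ}
    (hp : p ∈ Set.Icc 0 1) (hAB : (A - B).PosSemidef) :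
    (hA.rpow p - hB.1.rpow p).PosSemidef := by
  have hBA : B ≤ A := Matrix.le_iff.mpr hAB
  have hA₀ : A.PosSemidef := Matrix.nonneg_iff_posSemidef.mp (hB.nonneg.trans hBA)
  rw [isHermitian_rpow_eq_rpow_of_posSemidef hA₀, isHermitian_rpow_eq_rpow_of_posSemidef hB,
    ← Matrix.le_iff]
  exact CFC.rpow_le_rpow hp hBA

end

/-- Loewner–Heinz inequality. -/
theorem loewner_heinz {n : ℕ} {A B : Matrix (Fin n) (Fin n) ℂ}
    (hA : A.PosSemidef) (hB : B.PosSemidef) (p : ℝ) (hp0 : 0 ≤ p) (hp1 : p ≤ 1)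
    (hAB : (A - B).PosSemidef) :
    (hA.1.rpow p - hB.1.rpow p).PosSemidef :=
  loewner_heinz_general hA.1 hB ⟨hp0, hp1⟩ hAB
end
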